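/- Let G be a finite group acting by graded algebra automorphisms on F[V] = F[x_1,...,x_n] for a field F, and let f_1,...,f_n ∈ F[V]^G be homogeneous invariants. If the f_i are algebraically independent over F and the product of their degrees equals |G|, then F[V]^G = F[f_1,...,f_n]. -/

import Mathlib

open MvPolynomial Finset

namespace InvAux

open scoped ENNReal

lemma tsum_prod_pow (n : ℕ) (x : Fin n → ℝ≥0∞) :
    ∑' m : Fin n → ℕ, ∏ i, x i ^ m i = ∏ i, (1 - x i)⁻¹ := by
  induction n with
  | zero => simp
  | succ n ih =>
    rw [← (Fin.consEquiv (fun _ => ℕ)).tsum_eq, Fin.prod_univ_succ, ← ih]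
    simp only [Fin.consEquiv, Equiv.coe_fn_mk, Fin.prod_univ_succ, Fin.cons_zero, Fin.cons_succ]
    rw [ENNReal.tsum_prod (f := fun (a : ℕ) (b : Fin n → ℕ) => x 0 ^ a * ∏ i, x i.succ ^ b i)]
    simp_rw [ENNReal.tsum_mul_left, ENNReal.tsum_mul_right, ENNReal.tsum_geometric]

lemma hilb (n : ℕ) (d : Fin n → ℕ) (t : ℝ≥0∞) :
    ∑' m : Fin n →₀ ℕ, t ^ (∑ i, d i * m i) = ∏ i, (1 - t ^ d i)⁻¹ := by
  rw [← tsum_prod_pow, ← Finsupp.equivFunOnFinite.tsum_eq]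
  refine tsum_congr fun m => ?_
  simp [← Finset.prod_pow_eq_pow_sum, pow_mul]

lemma bern {t : ℝ≥0∞} (ht : t ≤ 1) (e : ℕ) : 1 - t ^ e ≤ e * (1 - t) := by
  rw [tsub_le_iff_left]
  induction e with
  | zero => simp
  | succ e ih =>
    refine ih.trans ?_
    have h1 : t ^ e = t ^ e * t + t ^ e * (1 - t) := by
      rw [← mul_add, add_tsub_cancel_of_le ht, mul_one]
    have h2 : t ^ e * (1 - t) ≤ 1 * (1 - t) := by gcongr; exact pow_le_one₀ (by simp) ht
    calc t ^ e + e * (1 - t) = t ^ e * t + t ^ e * (1 - t) + e * (1 - t) := by rw [← h1]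
      _ ≤ t ^ e * t + 1 * (1 - t) + e * (1 - t) := by gcongr
      _ = _ := by push_cast; ring

lemma inv_bern {t : ℝ≥0∞} (ht : t < 1) {e : ℕ} (he : 0 < e) :
    1 ≤ (e * (1 - t)) * (1 - t ^ e)⁻¹ := by
  have h0 : (1 - t ^ e) ≠ 0 := by
    rw [Ne, tsub_eq_zero_iff_le, not_le]
    exact pow_lt_one₀ (by simp) ht he.ne'
  have h1 : (1 - t ^ e) ≠ ⊤ := ne_top_of_le_ne_top ENNReal.one_ne_top tsub_le_self
  calc (1 : ℝ≥0∞) = (1 - t ^ e) * (1 - t ^ e)⁻¹ := (ENNReal.mul_inv_cancel h0 h1).symm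
    _ ≤ _ := by gcongr; exact bern ht.le e

lemma prod_bern {n : ℕ} (d : Fin n → ℕ) (hd : ∀ i, 0 < d i) {t : ℝ≥0∞} (ht : t < 1) :
    ∏ _i : Fin n, (1 - t)⁻¹ ≤ (∏ i, d i : ℕ) * ∏ i, (1 - t ^ d i)⁻¹ := by
  push_cast
  rw [← Finset.prod_mul_distrib]
  refine Finset.prod_le_prod' fun i _ => ?_
  have h0 : (1 - t) ≠ 0 := by
    rw [Ne, tsub_eq_zero_iff_le, not_le]; exact ht
  have h1 : (1 - t) ≠ ⊤ := ne_top_of_le_ne_top ENNReal.one_ne_top tsub_le_self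
  calc (1 - t)⁻¹ = 1 * (1 - t)⁻¹ := by simp
    _ ≤ ((d i * (1 - t)) * (1 - t ^ d i)⁻¹) * (1 - t)⁻¹ := by
      gcongr; exact inv_bern ht (hd i)
    _ = (d i * (1 - t ^ d i)⁻¹) * ((1 - t) * (1 - t)⁻¹) := by ring
    _ = _ := by rw [ENNReal.mul_inv_cancel h0 h1, mul_one]

lemma limit_contra {I : Type*} [Fintype I] [Nonempty I] (ε : I → ℕ) {e : ℕ}
    (h : ∀ t : ℝ≥0∞, 0 < t → t < 1 →
      (∑ i, t ^ ε i) * (e + t ^ e) ≤ e * Fintype.card I) : False := by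
  have h' : ∀ s : ℝ, 0 < s → s < 1 → (∑ i, s ^ ε i) * (e + s ^ e) ≤ e * Fintype.card I := by
    intro s h0 h1
    have := h (ENNReal.ofReal s) (by simpa using h0) (by simpa using h1)
    have h2 := ENNReal.toReal_mono (by finiteness) this
    simpa [ENNReal.toReal_sum, ENNReal.toReal_add, h0.le] using h2
  have hc : Filter.Tendsto (fun s : ℝ => (∑ i, s ^ ε i) * (e + s ^ e)) (nhdsWithin 1 (Set.Iio 1))
      (nhds ((∑ i, (1:ℝ) ^ ε i) * (e + 1 ^ e))) := by
    apply Filter.Tendsto.mono_left _ nhdsWithin_le_nhds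
    have : Continuous (fun s : ℝ => (∑ i, s ^ ε i) * (e + s ^ e)) := by fun_prop
    exact this.tendsto 1
  have h3 := le_of_tendsto hc (b := (e * Fintype.card I : ℝ)) (by
    filter_upwards [Ioo_mem_nhdsLT (show (0:ℝ) < 1 by norm_num)] with s hs
    exact h' s hs.1 hs.2)
  simp at h3
  have : (0:ℝ) < Fintype.card I := by exact_mod_cast Fintype.card_pos
  nlinarith

/-- weight sum over an index set containing the zero row -/
lemma tsum_rows {n : ℕ} (d : Fin n → ℕ) (e : ℕ) (t : ℝ≥0∞) (J : Set (ℕ × (Fin n →₀ ℕ)))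
    (h0 : ∀ m, (0, m) ∈ J) :
    ∑' j : J, t ^ (e * j.1.1 + ∑ i, d i * j.1.2 i) =
      ∏ i, (1 - t ^ d i)⁻¹ +
        ∑' k : ℕ, t ^ (e * (k + 1)) *
          ∑' m : {m : Fin n →₀ ℕ | (k + 1, m) ∈ J}, t ^ (∑ i, d i * (m : Fin n →₀ ℕ) i) := by
  classical
  rw [tsum_subtype J (fun j => t ^ (e * j.1 + ∑ i, d i * j.2 i)),
    ENNReal.tsum_prod (f := fun k m => J.indicator (fun j => t ^ (e * j.1 + ∑ i, d i * j.2 i)) (k, m)),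
    tsum_eq_zero_add' ENNReal.summable]
  congr 1
  · rw [← hilb]
    refine tsum_congr fun m => ?_
    simp [Set.indicator, h0]
  · refine tsum_congr fun k => ?_
    rw [tsum_subtype {m : Fin n →₀ ℕ | (k + 1, m) ∈ J} (fun m => t ^ (∑ i, d i * m i)),
      ← ENNReal.tsum_mul_left]
    refine tsum_congr fun m => ?_
    by_cases hm : (k + 1, m) ∈ J <;> simp [Set.indicator, hm, pow_add]

lemma H_ne_top {n : ℕ} (d : Fin n → ℕ) (hd : ∀ i, 0 < d i) {t : ℝ≥0∞} (ht : t < 1) :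
    ∏ i, (1 - t ^ d i)⁻¹ ≠ ⊤ := by
  refine ENNReal.prod_ne_top fun i _ => ?_
  rw [ENNReal.inv_ne_top, Ne, tsub_eq_zero_iff_le, not_le]
  exact pow_lt_one₀ (by simp) ht (hd i).ne'

lemma H_ne_zero {n : ℕ} (d : Fin n → ℕ) {t : ℝ≥0∞} :
    ∏ i, (1 - t ^ d i)⁻¹ ≠ 0 := by
  rw [Finset.prod_ne_zero_iff]
  intro i _
  rw [ENNReal.inv_ne_zero]
  exact ne_top_of_le_ne_top ENNReal.one_ne_top tsub_le_self

lemma case_one {n : ℕ} (d : Fin n → ℕ) {e : ℕ} (he : 0 < e) {t : ℝ≥0∞} :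
    (∏ i, (1 - t ^ d i)⁻¹) * (e + t ^ e) ≤
      e * ∑' j : {j : ℕ × (Fin n →₀ ℕ) | j.1 ≤ 1}, t ^ (e * j.1.1 + ∑ i, d i * j.1.2 i) := by
  rw [tsum_rows d e t _ (by simp)]
  set H := ∏ i, (1 - t ^ d i)⁻¹ with hH
  have h1 := ENNReal.le_tsum (f := fun k : ℕ => t ^ (e * (k + 1)) *
          ∑' m : {m : Fin n →₀ ℕ | (k + 1, m) ∈ {j : ℕ × (Fin n →₀ ℕ) | j.1 ≤ 1}},
            t ^ (∑ i, d i * (m : Fin n →₀ ℕ) i)) 0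
  have h2 : ∑' m : {m : Fin n →₀ ℕ | (0 + 1, m) ∈ {j : ℕ × (Fin n →₀ ℕ) | j.1 ≤ 1}},
            t ^ (∑ i, d i * (m : Fin n →₀ ℕ) i) = H := by
    rw [hH, ← hilb]
    rw [tsum_subtype {m : Fin n →₀ ℕ | (0 + 1, m) ∈ {j : ℕ × (Fin n →₀ ℕ) | j.1 ≤ 1}}
      (fun m => t ^ (∑ i, d i * m i))]
    simp
  simp only [h2] at h1
  have he1 : (1 : ℝ≥0∞) ≤ e := by exact_mod_cast he
  calc H * (e + t ^ e) = e * H + 1 * (t ^ (e * (0 + 1)) * H) := by ring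
    _ ≤ e * H + e * (t ^ (e * (0 + 1)) * H) := by gcongr
    _ = e * (H + t ^ (e * (0 + 1)) * H) := by ring
    _ ≤ _ := by gcongr

lemma case_two {n : ℕ} (d : Fin n → ℕ) (hd : ∀ i, 0 < d i) {e : ℕ} (he : 0 < e) {t : ℝ≥0∞}
    (ht : t < 1) (μ : Fin n →₀ ℕ) (hμ : μ ≠ 0) :
    (∏ i, (1 - t ^ d i)⁻¹) * (e + t ^ e) ≤
      e * ∑' j : {j : ℕ × (Fin n →₀ ℕ) | j.1 = 0 ∨ ¬ μ ≤ j.2},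
        t ^ (e * j.1.1 + ∑ i, d i * j.1.2 i) := by
  rw [tsum_rows d e t _ (by simp)]
  set H := ∏ i, (1 - t ^ d i)⁻¹ with hH
  set g : (Fin n →₀ ℕ) → ℝ≥0∞ := fun m => t ^ (∑ i, d i * m i) with hg
  have hHg : ∑' m, g m = H := hilb n d t
  set Q := ∑' m : ({m : Fin n →₀ ℕ | μ ≤ m}ᶜ : Set _), g m with hQ
  have hrow : ∀ k : ℕ, ∑' m : {m : Fin n →₀ ℕ | (k + 1, m) ∈
      {j : ℕ × (Fin n →₀ ℕ) | j.1 = 0 ∨ ¬ μ ≤ j.2}}, t ^ (∑ i, d i * (m : Fin n →₀ ℕ) i) = Q := by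
    intro k
    have : {m : Fin n →₀ ℕ | (k + 1, m) ∈ {j : ℕ × (Fin n →₀ ℕ) | j.1 = 0 ∨ ¬ μ ≤ j.2}}
      = {m : Fin n →₀ ℕ | μ ≤ m}ᶜ := by ext m; simp
    rw [this]
  simp_rw [hrow]
  rw [ENNReal.tsum_mul_right]
  have hgeo : ∑' k : ℕ, t ^ (e * (k + 1)) = t ^ e * (1 - t ^ e)⁻¹ := by
    rw [← ENNReal.tsum_geometric, ← ENNReal.tsum_mul_left]
    refine tsum_congr fun k => ?_
    rw [← pow_mul, ← pow_add]; congr 1; ring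
  rw [hgeo]
  have hshift : ∑' m : {m : Fin n →₀ ℕ | μ ≤ m}, g m ≤ t * H := by
    have h1 : ∀ m : {m : Fin n →₀ ℕ | μ ≤ m}, g m ≤ t * g ((m : Fin n →₀ ℕ) - μ) := by
      rintro ⟨m, hm⟩
      simp only [hg]
      rw [← pow_succ']
      refine pow_le_pow_of_le_one (by simp) ht.le ?_
      obtain ⟨j, hj⟩ : ∃ j, μ j ≠ 0 := by
        by_contra hcon
        push Not at hcon
        exact hμ (Finsupp.ext hcon)
      refine Nat.succ_le_of_lt (Finset.sum_lt_sum (fun i _ => ?_) ⟨j, Finset.mem_univ _, ?_⟩)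
      · simp only [Finsupp.tsub_apply]
        exact Nat.mul_le_mul_left _ (Nat.sub_le _ _)
      · simp only [Finsupp.tsub_apply]
        have h3 : μ j ≤ m j := hm j
        exact Nat.mul_lt_mul_of_pos_left (by omega) (hd j)
    calc ∑' m : {m : Fin n →₀ ℕ | μ ≤ m}, g m
        ≤ ∑' m : {m : Fin n →₀ ℕ | μ ≤ m}, t * g ((m : Fin n →₀ ℕ) - μ) := ENNReal.tsum_le_tsum h1
      _ = t * ∑' m : {m : Fin n →₀ ℕ | μ ≤ m}, g ((m : Fin n →₀ ℕ) - μ) := ENNReal.tsum_mul_left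
      _ ≤ t * ∑' m, g m := by
        gcongr
        refine ENNReal.tsum_comp_le_tsum_of_injective
          (f := fun m : {m : Fin n →₀ ℕ | μ ≤ m} => (m : Fin n →₀ ℕ) - μ) ?_ g
        rintro ⟨a, ha⟩ ⟨b, hb⟩ hab
        simp only at hab
        have h4 : a = b := by
          rw [← tsub_add_cancel_of_le (show μ ≤ a from ha), hab]
          exact tsub_add_cancel_of_le hb
        exact Subtype.ext h4
      _ = t * H := by rw [hHg]
  have hsplit : ∑' m : {m : Fin n →₀ ℕ | μ ≤ m}, g m + Q = H := by
    rw [← hHg]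
    exact Summable.tsum_add_tsum_compl ENNReal.summable ENNReal.summable
  have hQge : (1 - t) * H ≤ Q := by
    have hT : H ≠ ⊤ := H_ne_top d hd ht
    rw [ENNReal.sub_mul (fun _ _ => hT), one_mul, tsub_le_iff_left]
    calc H = ∑' m : {m : Fin n →₀ ℕ | μ ≤ m}, g m + Q := hsplit.symm
      _ ≤ _ := by gcongr
  calc H * (e + t ^ e) = e * H + t ^ e * 1 * H := by ring
    _ ≤ e * H + t ^ e * ((e * (1 - t)) * (1 - t ^ e)⁻¹) * H := by
      gcongr; exact inv_bern ht he
    _ = e * (H + t ^ e * (1 - t ^ e)⁻¹ * ((1 - t) * H)) := by ring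
    _ ≤ _ := by gcongr

lemma count {n : ℕ} {F : Type*} [Field F] {J : Type} (q : J → MvPolynomial (Fin n) F) (w : J → ℕ)
    (hq : LinearIndependent F q) (hw : ∀ j, (q j).IsHomogeneous (w j)) (t : ℝ≥0∞) :
    ∑' j, t ^ w j ≤ ∏ _i : Fin n, (1 - t)⁻¹ := by
  have key : ∀ k, Nonempty ({j // w j = k} ↪ {m : Fin n →₀ ℕ | m.degree = k}) := by
    intro k
    let q' : {j // w j = k} → homogeneousSubmodule (Fin n) F k := fun j =>
      ⟨q j, by have := hw j; rw [j.2] at this; exact this⟩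
    have hq' : LinearIndependent F q' := by
      apply LinearIndependent.of_comp (homogeneousSubmodule (Fin n) F k).subtype
      exact hq.comp _ Subtype.val_injective
    let B : Module.Basis {m : Fin n →₀ ℕ | m.degree = k} F (homogeneousSubmodule (Fin n) F k) :=
      .ofRepr ((LinearEquiv.ofEq _ _ (homogeneousSubmodule_eq_finsupp_supported (Fin n) F k)).trans
        (AddMonoidAlgebra.supportedEquivFinsupp _))
    have h1 := hq'.cardinal_lift_le_rank
    rw [← Cardinal.lift_mk_le']
    have h2 := B.mk_eq_rank
    simp only [Cardinal.lift_uzero] at h1 h2 ⊢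
    rw [← h2] at h1
    exact Cardinal.lift_le.1 h1
  have ι := fun k => Classical.choice (key k)
  have hi : Function.Injective (fun j => ((ι (w j) ⟨j, rfl⟩ : {m : Fin n →₀ ℕ | m.degree = w j}) : Fin n →₀ ℕ)) := by
    have aux : ∀ k l (a : {j // w j = k}) (b : {j // w j = l}),
        ((ι k a : {m : Fin n →₀ ℕ | m.degree = k}) : Fin n →₀ ℕ) = ι l b → (a : J) = b := by
      intro k l a b hab
      have hkl : k = l := by
        rw [← show _ = k from (ι k a).2, hab]; exact (ι l b).2
      subst hkl
      exact congrArg _ ((ι k).injective (Subtype.ext hab))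
    intro a b hab
    exact aux _ _ ⟨a, rfl⟩ ⟨b, rfl⟩ hab
  have h := ENNReal.tsum_comp_le_tsum_of_injective hi (fun m => t ^ (∑ i, 1 * m i))
  have h2 := hilb n (fun _ => 1) t
  simp only [pow_one] at h2
  rw [h2] at h
  refine le_trans (le_of_eq (tsum_congr fun j => ?_)) h
  congr 1
  have := (ι (w j) ⟨j, rfl⟩).2
  simp only [Set.mem_ofPred_eq, Finsupp.degree_eq_sum] at this
  simp [this]

section Act
variable {F : Type*} [Field F] {n : ℕ}

/-- the substitution given by a matrix -/
noncomputable def act (A : Matrix (Fin n) (Fin n) F) :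
    MvPolynomial (Fin n) F →ₐ[F] MvPolynomial (Fin n) F :=
  MvPolynomial.aeval (R := F) (fun k => ∑ j, (A k j) • MvPolynomial.X j)

lemma act_hom (A : Matrix (Fin n) (Fin n) F) {p : MvPolynomial (Fin n) F} {k : ℕ}
    (hp : p.IsHomogeneous k) : (act A p).IsHomogeneous k := by
  have := hp.aeval (S := F) (fun k => ∑ j, (A k j) • (MvPolynomial.X j : MvPolynomial (Fin n) F))
    (n := 1) (fun i => IsHomogeneous.sum _ _ _ fun j _ => by
      rw [smul_eq_C_mul]; exact isHomogeneous_C_mul_X _ _)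
  rwa [one_mul] at this

lemma act_inj {A B : Matrix (Fin n) (Fin n) F} (h : act A = act B) : A = B := by
  ext k l
  have h1 := congrArg (fun φ => coeff (Finsupp.single l 1) (φ (X k))) h
  simpa [act, coeff_sum, coeff_smul, coeff_X, Finsupp.single_left_inj] using h1

lemma act_component (A : Matrix (Fin n) (Fin n) F) (p : MvPolynomial (Fin n) F) (k : ℕ) :
    homogeneousComponent k (act A p) = act A (homogeneousComponent k p) := by
  conv_lhs => rw [← sum_homogeneousComponent p]
  rw [map_sum, map_sum]
  have : ∀ i, homogeneousComponent k (act A (homogeneousComponent i p)) =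
      if i = k then act A (homogeneousComponent i p) else 0 := by
    intro i
    rw [homogeneousComponent_of_mem (act_hom A (homogeneousComponent_isHomogeneous i p))]
    simp only [eq_comm]
  simp_rw [this]
  rw [Finset.sum_ite_eq']
  split_ifs with h
  · rfl
  · rw [homogeneousComponent_eq_zero, map_zero]
    simpa using h

/-- the ring of invariants -/
noncomputable def inv {G : Type*} (A : G → Matrix (Fin n) (Fin n) F) :
    Subalgebra F (MvPolynomial (Fin n) F) :=
  ⨅ g, AlgHom.equalizer (act (A g)) (AlgHom.id F _)

lemma mem_inv {G : Type*} {A : G → Matrix (Fin n) (Fin n) F} {p : MvPolynomial (Fin n) F} :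
    p ∈ inv A ↔ ∀ g, act (A g) p = p := by
  simp [inv, Algebra.mem_iInf, AlgHom.mem_equalizer]

lemma exists_indep {G : Type*} [Fintype G] (A : G → Matrix (Fin n) (Fin n) F)
    (hA : Function.Injective A) :
    ∃ (I : Type) (_ : Fintype I) (a : I → (Fin n →₀ ℕ)), Fintype.card I = Fintype.card G ∧
      LinearIndependent (inv A) (fun m : I => (monomial (a m) (1 : F))) := by
  classical
  let S := MvPolynomial (Fin n) F
  let K := FractionRing S
  let χ : G → (S →* K) := fun g => ((algebraMap S K).comp (act (A g)).toRingHom).toMonoidHom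
  have hχ : Function.Injective χ := by
    intro g h hgh
    apply hA
    apply act_inj
    ext1 k
    have := DFunLike.congr_fun hgh (X k)
    exact IsFractionRing.injective S K this
  have hli : LinearIndependent K (fun g => (χ g : S → K)) :=
    (linearIndependent_monoidHom S K).comp χ hχ
  let v : (Fin n →₀ ℕ) → (G → K) := fun m g => χ g (monomial m 1)
  have hspan : Submodule.span K (Set.range v) = ⊤ := by
    by_contra hne
    obtain ⟨φ, hφ0, hφ⟩ := Submodule.exists_le_ker_of_lt_top _ (lt_top_iff_ne_top.2 hne)
    apply hφ0
    have hφs : ∀ x : G → K, φ x = ∑ g, x g * φ (Pi.single g 1) := by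
      intro x
      conv_lhs => rw [← Finset.univ_sum_single x]
      rw [map_sum]
      refine Finset.sum_congr rfl fun g _ => ?_
      rw [← smul_eq_mul, ← map_smul, ← Pi.single_smul, smul_eq_mul, mul_one]
    have hz : ∀ g, φ (Pi.single g 1) = 0 := by
      refine Fintype.linearIndependent_iff.1 hli _ ?_
      funext p
      simp only [Finset.sum_apply, Pi.smul_apply, smul_eq_mul, Pi.zero_apply]
      induction p using MvPolynomial.induction_on' with
      | monomial m a =>
        have h1 : φ (v m) = 0 := hφ (Submodule.subset_span ⟨m, rfl⟩)
        rw [hφs] at h1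
        have h2 : ∀ g, χ g (monomial m a) = algebraMap S K (C a) * v m g := by
          intro g
          have : monomial m a = C a * monomial m (1 : F) := by rw [C_mul_monomial, mul_one]
          rw [this, map_mul]
          congr 1
          change algebraMap S K (act (A g) (C a)) = _
          congr 1
          exact (act (A g)).commutes a
        calc _ = algebraMap S K (C a) * ∑ g, v m g * φ (Pi.single g 1) := by
              rw [Finset.mul_sum]
              refine Finset.sum_congr rfl fun g _ => ?_
              rw [h2]; ring
          _ = 0 := by rw [h1, mul_zero]
      | add p q hp hq =>
        have h2 : ∀ g, χ g (p + q) = χ g p + χ g q := by intro g; simp [χ]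
        simp_rw [h2, mul_add, Finset.sum_add_distrib, hp, hq, add_zero]
    ext x
    simp [hz]
  obtain ⟨I, a, -, hIs, hI⟩ := exists_linearIndependent' K v
  let B : Module.Basis I K (G → K) := Module.Basis.mk hI (by rw [hIs, hspan])
  have : Finite I := Module.Finite.finite_basis B
  let _ : Fintype I := Fintype.ofFinite I
  refine ⟨I, inferInstance, a, ?_, ?_⟩
  · rw [← Module.finrank_eq_card_basis B, Module.finrank_fintype_fun_eq_card]
  · rw [Fintype.linearIndependent_iff]
    intro r hr i
    have h1 : ∑ i, (algebraMap S K (r i : S)) • v (a i) = 0 := by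
      funext g
      have h2 := congrArg (fun p => algebraMap S K (act (A g) p)) hr
      simp only [map_sum, map_zero] at h2
      simp only [Finset.sum_apply, Pi.smul_apply, smul_eq_mul, Pi.zero_apply]
      rw [← h2]
      refine Finset.sum_congr rfl fun j _ => ?_
      rw [Subalgebra.smul_def, smul_eq_mul, map_mul, map_mul, mem_inv.1 (r j).2 g]
      rfl
    have h3 := Fintype.linearIndependent_iff.1 hI _ h1 i
    have h4 : (r i : S) = 0 := IsFractionRing.injective S K (by rw [h3, map_zero])
    exact Subtype.ext h4
end Act

section Core
variable {F : Type*} [Field F] {n : ℕ}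

open Polynomial in
lemma indep_of_supp {S : Type*} [CommRing S] [Algebra F S]
    (φ : MvPolynomial (Fin n) F →ₐ[F] S) (p : S) (J : Set (ℕ × (Fin n →₀ ℕ)))
    (hJ : ∀ P : Polynomial (MvPolynomial (Fin n) F),
      (∀ k, ∀ m ∈ (P.coeff k).support, (k, m) ∈ J) →
      P.eval₂ (φ : MvPolynomial (Fin n) F →+* S) p = 0 → P = 0) :
    LinearIndependent F (fun j : J => p ^ j.1.1 * φ (MvPolynomial.monomial j.1.2 1)) := by
  classical
  rw [linearIndependent_iff]
  intro l hl
  let P : Polynomial (MvPolynomial (Fin n) F) :=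
    l.sum fun j c => Polynomial.monomial j.1.1 (MvPolynomial.monomial j.1.2 c)
  have hco : ∀ k m, MvPolynomial.coeff m (P.coeff k) =
      l.sum fun j c => if j.1 = (k, m) then c else 0 := by
    intro k m
    simp only [P, Finsupp.sum, Polynomial.finsetSum_coeff, MvPolynomial.coeff_sum,
      Polynomial.coeff_monomial]
    refine Finset.sum_congr rfl fun j _ => ?_
    rcases j with ⟨⟨k', m'⟩, hj⟩
    by_cases h1 : k' = k <;> by_cases h2 : m' = m <;> simp [h1, h2, MvPolynomial.coeff_monomial]
  have hP : P = 0 := by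
    apply hJ
    · intro k m hm
      rw [MvPolynomial.mem_support_iff, hco] at hm
      by_contra hn
      apply hm
      refine Finset.sum_eq_zero fun j _ => ?_
      refine if_neg ?_
      intro h
      exact hn (h ▸ j.2)
    · rw [← hl, Finsupp.linearCombination_apply]
      simp only [P, Finsupp.sum, Polynomial.eval₂_finsetSum, Polynomial.eval₂_monomial]
      refine Finset.sum_congr rfl fun j _ => ?_
      have : MvPolynomial.monomial j.1.2 (l j) = l j • MvPolynomial.monomial j.1.2 (1 : F) := by
        rw [MvPolynomial.smul_monomial, smul_eq_mul, mul_one]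
      rw [this]
      simp [mul_comm]
  ext j
  have h1 := hco j.1.1 j.1.2
  rw [hP] at h1
  simp only [Polynomial.coeff_zero, MvPolynomial.coeff_zero] at h1
  rw [Finsupp.coe_zero, Pi.zero_apply, h1, Finsupp.sum, Finset.sum_eq_single j]
  · simp
  · intro b _ hb
    refine if_neg ?_
    intro h
    exact hb (Subtype.ext h)
  · intro h
    simpa using h

lemma exists_J {S : Type*} [CommRing S] [IsDomain S] [Algebra F S]
    (φ : MvPolynomial (Fin n) F →ₐ[F] S) (hφ : Function.Injective φ) (p : S)
    (hp : p ∉ φ.range) (d : Fin n → ℕ) (hd : ∀ i, 0 < d i) {e : ℕ} (he : 0 < e) :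
    ∃ J : Set (ℕ × (Fin n →₀ ℕ)),
      LinearIndependent F (fun j : J => p ^ j.1.1 * φ (monomial j.1.2 1)) ∧
      ∀ t : ℝ≥0∞, t < 1 → (∏ i, (1 - t ^ d i)⁻¹) * (e + t ^ e) ≤
        e * ∑' j : J, t ^ (e * j.1.1 + ∑ i, d i * j.1.2 i) := by
  let T := MvPolynomial (Fin n) F
  let KT := FractionRing T
  let K := FractionRing S
  have hSK : Function.Injective (algebraMap S K) := IsFractionRing.injective S K
  have hg : Function.Injective ((algebraMap S K).comp (φ : T →+* S)) := hSK.comp hφ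
  let ι : KT →+* K := IsFractionRing.lift hg
  have hι : ∀ x : T, ι (algebraMap T KT x) = algebraMap S K (φ x) :=
    fun x => IsFractionRing.lift_algebraMap hg x
  by_cases hr : ∃ r : KT, ι r = algebraMap S K p
  · obtain ⟨r, hr⟩ := hr
    let b : T := IsFractionRing.den T r
    have hb0 : b ≠ 0 := nonZeroDivisors.coe_ne_zero _
    let μ := (MonomialOrder.lex (σ := Fin n)).degree b
    have hbu : ¬ IsUnit b := by
      intro hu
      obtain ⟨x, hx⟩ := IsFractionRing.isInteger_of_isUnit_den hu
      apply hp
      refine ⟨x, hSK ?_⟩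
      rw [← hr, ← hx]
      exact (hι x).symm
    have hμ : μ ≠ 0 := by
      intro h0
      have h1 := MonomialOrder.degree_eq_zero_iff.1 h0
      apply hbu
      rw [h1]
      refine IsUnit.map C (isUnit_iff_ne_zero.2 ?_)
      intro h2
      rw [h2, C_0] at h1
      exact hb0 h1
    refine ⟨{j | j.1 = 0 ∨ ¬ μ ≤ j.2}, indep_of_supp φ p _ ?_, fun t ht => case_two d hd he ht μ hμ⟩
    intro P hP hP0
    have hroot : Polynomial.aeval r P = 0 := by
      apply ι.injective
      rw [Polynomial.aeval_def, Polynomial.hom_eval₂, map_zero, hr]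
      have : ι.comp (algebraMap T KT) = (algebraMap S K).comp (φ : T →+* S) :=
        RingHom.ext hι
      rw [this, ← Polynomial.hom_eval₂, hP0, map_zero]
    by_contra hne
    by_cases hdeg : P.natDegree = 0
    · rw [Polynomial.natDegree_eq_zero] at hdeg
      obtain ⟨c, rfl⟩ := hdeg
      rw [Polynomial.eval₂_C] at hP0
      apply hne
      have : c = 0 := hφ (by rw [map_zero]; exact hP0)
      rw [this, Polynomial.C_0]
    · obtain ⟨c, hc⟩ := den_dvd_of_is_root hroot
      have hl : P.leadingCoeff ≠ 0 := Polynomial.leadingCoeff_ne_zero.2 hne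
      have hc0 : c ≠ 0 := by rintro rfl; exact hl (by rw [hc, mul_zero])
      have hm := MonomialOrder.degree_mem_support (m := MonomialOrder.lex) hl
      have h2 := hP P.natDegree _ hm
      rcases h2 with h2 | h2
      · exact hdeg h2
      · apply h2
        simp only
        rw [hc, MonomialOrder.degree_mul hb0 hc0]
        exact le_self_add
  · refine ⟨{j | j.1 ≤ 1}, indep_of_supp φ p _ ?_, fun t ht => case_one d he⟩
    intro P hP hP0
    have hdeg : P.natDegree ≤ 1 := by
      rw [Polynomial.natDegree_le_iff_coeff_eq_zero]
      intro k hk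
      rw [← MvPolynomial.support_eq_empty, Finset.eq_empty_iff_forall_notMem]
      intro m hm
      have : k ≤ 1 := hP k m hm
      omega
    obtain ⟨a, b, rfl⟩ := Polynomial.exists_eq_X_add_C_of_natDegree_le_one hdeg
    simp only [Polynomial.eval₂_add, Polynomial.eval₂_mul, Polynomial.eval₂_C,
      Polynomial.eval₂_X] at hP0
    have ha : a = 0 := by
      by_contra ha
      apply hr
      refine ⟨- algebraMap T KT b / algebraMap T KT a, ?_⟩
      rw [map_div₀, map_neg, hι, hι, div_eq_iff, neg_eq_iff_add_eq_zero, ← map_mul, ← map_add]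
      · have : φ b + p * φ a = 0 := by rw [← hP0]; simp; ring
        rw [this, map_zero]
      · rw [Ne, map_eq_zero_iff _ hSK, map_eq_zero_iff _ hφ]; exact ha
    subst ha
    have hb : b = 0 := hφ (by simpa using hP0)
    simp [hb]
end Core

lemma main {F : Type*} [Field F] {n : ℕ} {G : Type*} [Fintype G] [Nonempty G]
    (A : G → Matrix (Fin n) (Fin n) F) (hA : Function.Injective A)
    (f : Fin n → MvPolynomial (Fin n) F) (d : Fin n → ℕ)
    (hhom : ∀ i, (f i).IsHomogeneous (d i))
    (hinv : ∀ i, f i ∈ inv A)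
    (halg : AlgebraicIndependent F f)
    (hdeg : ∏ i, d i = Fintype.card G) : inv A ≤ (aeval (R := F) f).range := by
  have hd : ∀ i, 0 < d i := by
    intro i
    refine Nat.pos_of_ne_zero fun h => ?_
    have := Finset.prod_eq_zero (Finset.mem_univ i) h
    rw [hdeg] at this
    exact Fintype.card_ne_zero this
  -- homogeneous case
  have hmain : ∀ (e : ℕ) (p : MvPolynomial (Fin n) F), p.IsHomogeneous e → p ∈ inv A →
      p ∈ (aeval (R := F) f).range := by
    intro e p hpe hpi
    by_contra hp
    have he : 0 < e := by
      refine Nat.pos_of_ne_zero fun h => hp ?_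
      subst h
      rw [← totalDegree_zero_iff_isHomogeneous, totalDegree_eq_zero_iff_eq_C] at hpe
      rw [hpe]
      exact Subalgebra.algebraMap_mem _ _
    let φ : MvPolynomial (Fin n) F →ₐ[F] inv A := aeval (R := F) (fun i => (⟨f i, hinv i⟩ : inv A))
    have hφ : ∀ x, ((φ x : inv A) : MvPolynomial (Fin n) F) = aeval f x := by
      intro x
      have : (inv A).val.comp φ = aeval f := by
        ext1 i; simp [φ]
      exact DFunLike.congr_fun this x
    have hφi : Function.Injective φ := by
      intro x y hxy
      apply halg
      rw [← hφ, ← hφ, hxy]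
    obtain ⟨J, hJ, hJt⟩ := exists_J φ hφi ⟨p, hpi⟩ (by
      rintro ⟨x, hx⟩
      apply hp
      refine ⟨x, ?_⟩
      have := congrArg Subtype.val hx
      exact (hφ x).symm.trans this) d hd he
    obtain ⟨I, hIf, a, hIc, hI⟩ := exists_indep A hA
    have hIne : Nonempty I := by
      rw [← Fintype.card_pos_iff, hIc]; exact Fintype.card_pos
    have hli := linearIndependent_smul hJ hI
    refine limit_contra (I := I) (fun i => (a i).degree) (e := e) fun t ht0 ht1 => ?_
    have hc := count _ (fun x : J × I => (e * x.1.1.1 + ∑ i, d i * x.1.1.2 i) + (a x.2).degree) hli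
      (by
        rintro ⟨⟨⟨k, m⟩, hj⟩, i⟩
        simp only [Subalgebra.smul_def, smul_eq_mul, Subalgebra.coe_mul, Subalgebra.coe_pow, hφ]
        refine ((hpe.pow k).mul ?_).mul (isHomogeneous_monomial _ rfl)
        rw [aeval_monomial, map_one, one_mul, Finsupp.prod_fintype _ _ (by simp)]
        exact IsHomogeneous.prod _ _ _ fun i _ => (hhom i).pow _) t
    simp only [pow_add _ _ (Finsupp.degree _)] at hc
    rw [ENNReal.tsum_prod (f := fun (x : J) (i : I) =>
      t ^ (e * x.1.1 + ∑ i, d i * x.1.2 i) * t ^ (a i).degree)] at hc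
    simp_rw [ENNReal.tsum_mul_left, ENNReal.tsum_mul_right, tsum_fintype] at hc
    have h2 := prod_bern d hd ht1
    have h3 := hJt t ht1
    have hT := H_ne_top d hd ht1
    have h0 := H_ne_zero d (t := t)
    rw [hdeg, ← hIc] at h2
    set H := ∏ i, (1 - t ^ d i)⁻¹
    set U := ∑ i, t ^ (a i).degree
    set B := ∑' j : J, t ^ (e * j.1.1 + ∑ i, d i * j.1.2 i)
    rw [← ENNReal.mul_le_mul_iff_right h0 hT]
    calc H * (U * (e + t ^ e)) = U * (H * (e + t ^ e)) := by ring
      _ ≤ U * (e * B) := by gcongr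
      _ = e * (B * U) := by ring
      _ ≤ e * (Fintype.card I * H) := mul_le_mul_right (hc.trans h2) _
      _ = _ := by ring
  intro p hp
  rw [← sum_homogeneousComponent p]
  refine Subalgebra.sum_mem _ fun k _ => hmain k _ (homogeneousComponent_isHomogeneous k p) ?_
  rw [mem_inv] at hp ⊢
  intro g
  rw [← act_component, hp g]

end InvAux



theorem stmt_7 (F : Type*) [Field F] (n : ℕ) (G : Type*) [Group G] [Fintype G]
    (M : G →* Matrix.GeneralLinearGroup (Fin n) F) (hM : Function.Injective M)
    (f : Fin n → MvPolynomial (Fin n) F) (d : Fin n → ℕ)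
    (hhom : ∀ i, (f i).IsHomogeneous (d i))
    (hinv : ∀ (g : G) (i : Fin n),
      MvPolynomial.aeval (R := F)
        (fun k => ∑ j, ((M g : Matrix (Fin n) (Fin n) F) k j) • MvPolynomial.X j) (f i) = f i)
    (halg : AlgebraicIndependent F f)
    (hdeg : ∏ i, d i = Fintype.card G) :
    {p : MvPolynomial (Fin n) F |
        ∀ g : G, MvPolynomial.aeval (R := F)
          (fun k => ∑ j, ((M g : Matrix (Fin n) (Fin n) F) k j) • MvPolynomial.X j) p = p}
      = ↑(Algebra.adjoin F (Set.range f)) := by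
  have hA : Function.Injective (fun g => (M g : Matrix (Fin n) (Fin n) F)) := fun g h hgh =>
    hM (Units.ext hgh)
  have hinv' : ∀ i, f i ∈ InvAux.inv (fun g => (M g : Matrix (Fin n) (Fin n) F)) := fun i =>
    InvAux.mem_inv.2 fun g => hinv g i
  have h1 := InvAux.main _ hA f d hhom hinv' halg hdeg
  rw [Algebra.adjoin_range_eq_range_aeval]
  ext p
  constructor
  · intro hp
    exact h1 (InvAux.mem_inv.2 hp)
  · intro hp
    have h2 : (aeval (R := F) f).range ≤ InvAux.inv (fun g => (M g : Matrix (Fin n) (Fin n) F)) := by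
      rw [← Algebra.adjoin_range_eq_range_aeval, Algebra.adjoin_le_iff]
      rintro _ ⟨i, rfl⟩
      exact hinv' i
    exact InvAux.mem_inv.1 (h2 hp)
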